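/- Let D be a squarefree product of n distinct odd primes, and consider E: y² = x³ + 2Dx with 2-isogenous curve E': y² = x³ - 8Dx. Then #S^(φ)(E) = #S^(φ)(E'), i.e., the Tamagawa ratio T_{-2D} = 1. -/

import Mathlib

/-- Solvability of `W² = d + e·Z⁴` over the `p`-adic field `ℚ_p`. -/
def locSolvAt (p : ℕ) (hp : p.Prime) (d e : ℚ) : Prop :=
  haveI : Fact p.Prime := ⟨hp⟩
  ∃ W Z : ℚ_[p], W ^ 2 = (d : ℚ_[p]) + (e : ℚ_[p]) * Z ^ 4

/-- The value of the square class represented by a sign `ε`, a power of two bit `t`,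
and a set `S` of indices of odd primes: `±2^t·∏_{i ∈ S} pᵢ`. -/
def classVal {n : ℕ} (p : Fin n → ℕ) (x : Bool × Bool × Finset (Fin n)) : ℚ :=
  (if x.1 then -1 else 1) * (if x.2.1 then 2 else 1) * ∏ i ∈ x.2.2, (p i : ℚ)

/-- Membership of the square class `x` in the `φ`-Selmer group attached to the torsors
`W² = d + (c/d)Z⁴`: local solvability at `∞`, at `2` and at each odd prime `pᵢ`. -/
def inSelmer {n : ℕ} (p : Fin n → ℕ) (hp : ∀ i, (p i).Prime) (c : ℚ)
    (x : Bool × Bool × Finset (Fin n)) : Prop :=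
  (∃ W Z : ℝ, W ^ 2 = (classVal p x : ℝ) + ((c / classVal p x : ℚ) : ℝ) * Z ^ 4) ∧
  locSolvAt 2 Nat.prime_two (classVal p x) (c / classVal p x) ∧
  ∀ i : Fin n, locSolvAt (p i) (hp i) (classVal p x) (c / classVal p x)

/-!
At an odd prime `p i`, the torsor attached to a class `d` of support `S` is solvable if and only if
`d` (when `i ∉ S`) or `c / d` (when `i ∈ S`) is a square modulo `p i`. Translation by the class of
`c`, the image of the `2`-torsion point `(0, 0)`, exchanges odd and even `d`, so only odd `d`
matter. For these, the real place and `2` determine the sign of `d`: it is positive for `c = 2D`,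
and such that `d ≡ 1 mod 4` for `c = -8D`. Quadratic reciprocity shows that the conditions at the
`p i` then imply solvability over `ℚ₂`, and that they put the indicator vector of `S` in the kernel
of one and the same Rédei matrix over `𝔽₂` for `c = 2D`, and of its transpose for `c = -8D`. The two
kernels have the same dimension.
-/

open Filter Function Topology
open scoped NumberTheorySymbols

/-- The quartic `W² = d + e·Z⁴`, a `2`-covering of an elliptic curve with a rational `2`-torsion
point, has a point over `R`. -/
def QuarticSolvable (R : Type*) [CommRing R] (d e : R) : Prop :=
  ∃ W Z : R, W ^ 2 = d + e * Z ^ 4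

section Quartic

lemma QuarticSolvable.map {R S : Type*} [CommRing R] [CommRing S] (f : R →+* S) {d e : R}
    (h : QuarticSolvable R d e) : QuarticSolvable S (f d) (f e) := by
  obtain ⟨W, Z, h⟩ := h
  exact ⟨f W, f Z, by simpa using congrArg f h⟩

lemma QuarticSolvable.of_isSquare {R : Type*} [CommRing R] {d e : R} (h : IsSquare d) :
    QuarticSolvable R d e := by
  obtain ⟨W, rfl⟩ := h
  exact ⟨W, 0, by ring⟩

variable {K : Type*}

lemma eventually_isSquare_nhds [NontriviallyNormedField K] [CompleteSpace K] [NeZero (2 : K)]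
    {a : K} (ha : IsSquare a) (ha0 : a ≠ 0) : ∀ᶠ x in 𝓝 a, IsSquare x := by
  obtain ⟨r, rfl⟩ := ha
  have hr : r ≠ 0 := left_ne_zero_of_mul ha0
  have hderiv : HasStrictDerivAt (fun x : K ↦ x ^ 2) (2 * r) r := by
    simpa using hasStrictDerivAt_pow 2 r
  rw [← sq, ← hderiv.map_nhds_eq (mul_ne_zero two_ne_zero hr)]
  exact eventually_map.2 (.of_forall fun x ↦ IsSquare.sq x)

/-- At a point with `Z = 0`, squares being open provides another one with `Z ≠ 0`. -/
lemma QuarticSolvable.symm [NontriviallyNormedField K] [CompleteSpace K] [NeZero (2 : K)] {d e : K}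
    (hd : d ≠ 0) (h : QuarticSolvable K d e) : QuarticSolvable K e d := by
  suffices ∃ W Z : K, Z ≠ 0 ∧ W ^ 2 = d + e * Z ^ 4 by
    obtain ⟨W, Z, hZ, h⟩ := this
    exact ⟨W / Z ^ 2, 1 / Z, by field_simp; linear_combination h⟩
  obtain ⟨W, Z, h⟩ := h
  by_cases hZ : Z = 0
  · have hsq : IsSquare d := ⟨W, by simpa [hZ, sq] using h.symm⟩
    have hlim : Tendsto (fun z : K ↦ d + e * z ^ 4) (𝓝[≠] 0) (𝓝 d) :=
      (Continuous.tendsto' (by fun_prop) 0 d (by simp)).mono_left nhdsWithin_le_nhds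
    obtain ⟨z, ⟨w, hw⟩, hz⟩ :=
      ((hlim.eventually (eventually_isSquare_nhds hsq hd)).and self_mem_nhdsWithin).exists
    exact ⟨w, z, hz, by rw [hw, sq]⟩
  · exact ⟨W, Z, hZ, h⟩

/-- Translation of the class of `d` by that of `c`, the image of the `2`-torsion point `(0, 0)`. -/
lemma QuarticSolvable.div_of_mul_eq [NontriviallyNormedField K] [CompleteSpace K] [NeZero (2 : K)]
    {c d d' r : K} (hc : c ≠ 0) (hdd' : d * d' * r ^ 2 = c) (h : QuarticSolvable K d (c / d)) :
    QuarticSolvable K d' (c / d') := by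
  have hd : d ≠ 0 := by rintro rfl; simp_all
  have hd' : d' ≠ 0 := by rintro rfl; simp_all
  have hr : r ≠ 0 := by rintro rfl; simp_all
  obtain ⟨W, Z, h⟩ := h.symm hd
  refine ⟨W / r, Z / r, ?_⟩
  subst hdd'
  field_simp at h ⊢
  linear_combination h

lemma QuarticSolvable.ratCast_div_of_mul_eq {K : Type*} [NontriviallyNormedField K]
    [CompleteSpace K] [CharZero K] {c d d' r : ℚ} (hc : c ≠ 0) (hdd' : d * d' * r ^ 2 = c)
    (h : QuarticSolvable K d (c / d : ℚ)) : QuarticSolvable K d' (c / d' : ℚ) := by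
  rw [Rat.cast_div] at h ⊢
  exact h.div_of_mul_eq (mod_cast hc) (r := r) (mod_cast congrArg (Rat.cast (K := K)) hdd')

lemma quarticSolvable_comm [NontriviallyNormedField K] [CompleteSpace K] [NeZero (2 : K)] {d e : K}
    (hd : d ≠ 0) (he : e ≠ 0) : QuarticSolvable K d e ↔ QuarticSolvable K e d :=
  ⟨.symm hd, .symm he⟩

lemma quarticSolvable_real_iff {d e : ℝ} : QuarticSolvable ℝ d e ↔ 0 ≤ d ∨ 0 < e := by
  constructor
  · rintro ⟨W, Z, h⟩
    by_contra! hneg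
    nlinarith [sq_nonneg W, mul_nonpos_of_nonpos_of_nonneg hneg.2 (by positivity : 0 ≤ Z ^ 4)]
  · rintro (hd | he)
    · exact .of_isSquare ⟨√d, (Real.mul_self_sqrt hd).symm⟩
    · have hlim : Tendsto (fun z : ℝ ↦ d + e * z ^ 4) atTop atTop :=
        tendsto_atTop_add_const_left _ _ ((tendsto_pow_atTop four_ne_zero).const_mul_atTop he)
      obtain ⟨z, hz⟩ := (hlim.eventually_ge_atTop 0).exists
      exact ⟨√(d + e * z ^ 4), z, Real.sq_sqrt hz⟩

end Quartic

section Padic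

variable {p : ℕ} [Fact p.Prime]

lemma padicInt_isSquare_of_norm_sub_lt {u r : ℤ_[p]} (h : ‖r ^ 2 - u‖ < ‖2 * r‖ ^ 2) :
    IsSquare u := by
  obtain ⟨z, hz, -⟩ := hensels_lemma (R := ℤ_[p]) (F := .X ^ 2 - .C u) (a := r)
    (by simpa [one_add_one_eq_two] using h)
  exact ⟨z, by simpa [sub_eq_zero, sq, eq_comm] using hz⟩

lemma padicInt_isSquare_intCast_iff (hp2 : p ≠ 2) {d : ℤ} (hd : ¬ (p : ℤ) ∣ d) :
    IsSquare (d : ℤ_[p]) ↔ IsSquare (d : ZMod p) := by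
  refine ⟨fun h ↦ by simpa using h.map PadicInt.toZMod, ?_⟩
  rintro ⟨r, hr⟩
  obtain ⟨a, rfl⟩ := ZMod.intCast_surjective r
  have hdvd : (p : ℤ) ∣ a ^ 2 - d := by
    rw [← ZMod.intCast_zmod_eq_zero_iff_dvd]
    push_cast
    rw [hr, sq, sub_self]
  have h2a : ¬ (p : ℤ) ∣ 2 * a := fun h ↦ by
    rcases (Nat.prime_iff_prime_int.1 Fact.out).dvd_or_dvd h with h2 | ha
    · exact hp2 ((Nat.prime_dvd_prime_iff_eq Fact.out Nat.prime_two).1 (by exact_mod_cast h2))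
    · exact hd (by simpa using dvd_sub (dvd_pow ha two_ne_zero) hdvd)
  have hunit : ‖(2 * a : ℤ_[p])‖ = 1 :=
    (PadicInt.norm_le_one _).antisymm <| not_lt.1 fun h ↦
      h2a ((PadicInt.norm_int_lt_one_iff_dvd _).1 (by exact_mod_cast h))
  refine padicInt_isSquare_of_norm_sub_lt (r := a) ?_
  rw [hunit, one_pow]
  exact_mod_cast (PadicInt.norm_int_lt_one_iff_dvd _).2 hdvd

lemma padicInt_two_isSquare_intCast {d : ℤ} (hd : d % 8 = 1) : IsSquare (d : ℤ_[2]) := by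
  refine padicInt_isSquare_of_norm_sub_lt (r := 1) ?_
  have hdist : ‖((1 - d : ℤ) : ℤ_[2])‖ ≤ (2 : ℕ) ^ (-(3 : ℕ) : ℤ) :=
    PadicInt.norm_int_le_pow_iff_dvd.2 (by norm_num; lia)
  have htwo : ‖(2 : ℤ_[2])‖ = 2⁻¹ := by simpa using PadicInt.norm_p (p := 2)
  push_cast at hdist
  rw [one_pow, mul_one, htwo]
  exact hdist.trans_lt (by norm_num)

lemma padic_valuation_eq_of_norm_eq {x y : ℚ_[p]} (h : ‖x‖ = ‖y‖) : x.valuation = y.valuation := by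
  by_cases hx : x = 0
  · rw [hx, norm_zero, eq_comm, norm_eq_zero] at h
    rw [hx, h]
  · have hy : y ≠ 0 := norm_ne_zero_iff.1 (h ▸ norm_ne_zero_iff.2 hx)
    have hp1 : (1 : ℝ) < p := by exact_mod_cast (Fact.out : p.Prime).one_lt
    rw [Padic.norm_eq_zpow_neg_valuation hx, Padic.norm_eq_zpow_neg_valuation hy] at h
    exact neg_injective (zpow_right_injective₀ (by positivity) hp1.ne' h)

/-- If `Z` were not integral, `e·Z⁴` would dominate `d`, so `W²` would have odd valuation. -/
lemma padic_norm_le_one_of_sq_eq {d e W Z : ℚ_[p]} (hd : ‖d‖ ≤ 1) (hodd : Odd e.valuation)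
    (hle : e.valuation ≤ 3) (h : W ^ 2 = d + e * Z ^ 4) : ‖Z‖ ≤ 1 := by
  by_contra! hZ
  have hZ0 : Z ≠ 0 := norm_pos_iff.1 (one_pos.trans hZ)
  have he0 : e ≠ 0 := by rintro rfl; simp at hodd
  have hval : (e * Z ^ 4).valuation = e.valuation + 4 * Z.valuation := by
    rw [Padic.valuation_mul he0 (pow_ne_zero _ hZ0), Padic.valuation_pow, Nat.cast_ofNat]
  have hZval : Z.valuation < 0 := not_le.1 fun h ↦
    hZ.not_ge ((Padic.norm_le_one_iff_val_nonneg Z).2 h)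
  have hdom : ‖d‖ < ‖e * Z ^ 4‖ := hd.trans_lt <| not_le.1 fun h ↦ by
    have := (Padic.norm_le_one_iff_val_nonneg _).1 h
    lia
  have hWval : (W ^ 2).valuation = (e * Z ^ 4).valuation :=
    padic_valuation_eq_of_norm_eq (by rw [h, Padic.add_eq_max_of_ne hdom.ne, max_eq_right hdom.le])
  rw [hval, Padic.valuation_pow] at hWval
  obtain ⟨k, hk⟩ := hodd
  push_cast at hWval
  lia

lemma QuarticSolvable.padicInt_of_padic {d e : ℤ_[p]} (hodd : Odd e.valuation)
    (hle : e.valuation ≤ 3) (h : QuarticSolvable ℚ_[p] d e) : QuarticSolvable ℤ_[p] d e := by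
  obtain ⟨W, Z, h⟩ := h
  have hZ : ‖Z‖ ≤ 1 :=
    padic_norm_le_one_of_sq_eq d.norm_le_one (by simpa using hodd) (by simpa using hle) h
  obtain ⟨Z, rfl⟩ : ∃ z : ℤ_[p], (z : ℚ_[p]) = Z := ⟨⟨Z, hZ⟩, rfl⟩
  have hW : ‖W‖ ≤ 1 := by
    rw [← pow_le_one_iff_of_nonneg (norm_nonneg _) two_ne_zero, ← norm_pow, h]
    have := (d + e * Z ^ 4).norm_le_one
    rw [PadicInt.norm_def] at this
    push_cast at this
    exact this
  obtain ⟨W, rfl⟩ : ∃ w : ℤ_[p], (w : ℚ_[p]) = W := ⟨⟨W, hW⟩, rfl⟩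
  exact ⟨W, Z, PadicInt.ext (by exact_mod_cast h)⟩

lemma padicInt_valuation_pow_mul (k : ℕ) {f : ℤ} (hf : ¬ (p : ℤ) ∣ f) :
    ((p : ℤ_[p]) ^ k * (f : ℤ_[p])).valuation = k := by
  have hf0 : f ≠ 0 := by rintro rfl; simp at hf
  have hfval : (f : ℤ_[p]).valuation = 0 := by
    zify
    rw [← PadicInt.valuation_coe, PadicInt.coe_intCast, Padic.valuation_intCast,
      padicValInt.eq_zero_of_not_dvd hf, Nat.cast_zero]
  rw [PadicInt.valuation_p_pow_mul _ _ (by exact_mod_cast hf0), hfval, add_zero]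

lemma quarticSolvable_padic_iff_jacobiSym (hp2 : p ≠ 2) {d f : ℤ} (hd : ¬ (p : ℤ) ∣ d)
    (hf : ¬ (p : ℤ) ∣ f) : QuarticSolvable ℚ_[p] d (p * f) ↔ J(d | p) = 1 := by
  rw [← jacobiSym.legendreSym.to_jacobiSym, legendreSym.eq_one_iff p
    (mt (ZMod.intCast_zmod_eq_zero_iff_dvd d p).1 hd)]
  constructor
  · intro h
    have hval : ((p : ℤ_[p]) * f).valuation = 1 := by simpa using padicInt_valuation_pow_mul 1 hf
    have hint : QuarticSolvable ℤ_[p] d (p * f) :=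
      .padicInt_of_padic (by simp [hval]) (by simp [hval]) (by simpa using h)
    obtain ⟨W, Z, h⟩ := hint.map PadicInt.toZMod
    exact ⟨W, by simpa [sq, eq_comm] using h⟩
  · intro h
    have hsq := ((padicInt_isSquare_intCast_iff hp2 hd).2 h).map PadicInt.Coe.ringHom
    exact .of_isSquare (by simpa using hsq)

lemma quarticSolvable_padic_two_of_emod_eight {d e : ℤ} (z : ℤ) (h : (d + e * z ^ 4) % 8 = 1) :
    QuarticSolvable ℚ_[2] d e := by
  obtain ⟨w, hw⟩ := (padicInt_two_isSquare_intCast h).map PadicInt.Coe.ringHom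
  exact ⟨w, z, by simpa [sq] using hw.symm⟩

lemma emod_four_eq_one_of_quarticSolvable_padic_two {d f : ℤ} (hd : Odd d) (hf : Odd f)
    (h : QuarticSolvable ℚ_[2] d (8 * f)) : d % 4 = 1 := by
  have hval : ((8 : ℤ_[2]) * f).valuation = 3 := by
    have := padicInt_valuation_pow_mul (p := 2) 3 (f := f)
      (mod_cast Int.two_dvd_ne_zero.2 (Int.odd_iff.1 hf))
    norm_num at this ⊢
    exact this
  have hint : QuarticSolvable ℤ_[2] d (8 * f) :=
    .padicInt_of_padic (by rw [hval]; decide) hval.le (by push_cast; exact h)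
  obtain ⟨W, Z, h⟩ := hint.map (PadicInt.toZModPow 2)
  obtain ⟨w, rfl⟩ := ZMod.intCast_surjective W
  obtain ⟨z, rfl⟩ := ZMod.intCast_surjective Z
  have hmod : w ^ 2 ≡ d + 8 * f * z ^ 4 [ZMOD (2 ^ 2 : ℕ)] := by
    rw [← ZMod.intCast_eq_intCast_iff]
    simpa [map_ofNat (PadicInt.toZModPow 2) 8] using h
  rw [mul_assoc, Int.modEq_iff_dvd] at hmod
  have hw : Odd w := by
    refine (Int.odd_pow' two_ne_zero).1 ?_
    grind
  have := Int.sq_mod_four_eq_one_of_odd hw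
  lia

end Padic

section JacobiSym

lemma jacobiSym_chi_four_mul {a b : ℕ} (ha : Odd a) (hb : Odd b) :
    J(ZMod.χ₄ a * a | b) = J(b | a) := by
  rw [jacobiSym.quadratic_reciprocity' hb ha, qrSign, jacobiSym.mul_left]

lemma jacobiSym_neg_chi_four_self {a : ℕ} (ha : Odd a) : J(-ZMod.χ₄ a | a) = 1 := by
  rcases Nat.odd_mod_four_iff.1 (Nat.odd_iff.1 ha) with h | h
  · rw [ZMod.χ₄_nat_one_mod_four h, jacobiSym.at_neg_one ha, ZMod.χ₄_nat_one_mod_four h]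
  · rw [ZMod.χ₄_nat_three_mod_four h, neg_neg, jacobiSym.one_left]

lemma jacobiSym_neg_eight_mul_chi_four_mul {q : ℕ} (hq : Odd q) (a : ℕ) :
    J(-8 * ZMod.χ₄ (q * a : ℕ) | q) = J(2 | q) * J(ZMod.χ₄ a | q) := by
  rw [Nat.cast_mul, map_mul,
    show -8 * (ZMod.χ₄ q * ZMod.χ₄ a) = 4 * (2 * (-ZMod.χ₄ q * ZMod.χ₄ a)) by ring]
  simp only [jacobiSym.mul_left, jacobiSym.at_four hq, jacobiSym_neg_chi_four_self hq, one_mul]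

lemma jacobiSym_neg_eight_mul_chi_four_self {q : ℕ} (hq : Odd q) :
    J(-8 * ZMod.χ₄ q | q) = J(2 | q) := by
  simpa using jacobiSym_neg_eight_mul_chi_four_mul hq 1

lemma jacobiSym_mul_self {a : ℤ} {b : ℕ} (h : a.gcd b = 1) : J(a | b) * J(a | b) = 1 := by
  rw [← sq, jacobiSym.sq_one h]

lemma jacobiSym_prod_left {ι : Type*} (S : Finset ι) (f : ι → ℤ) (b : ℕ) :
    J(∏ j ∈ S, f j | b) = ∏ j ∈ S, J(f j | b) := by
  classical
  induction S using Finset.induction_on with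
  | empty => simp
  | insert i S hi ih => rw [Finset.prod_insert hi, Finset.prod_insert hi, jacobiSym.mul_left, ih]

lemma jacobiSym_prod_right {ι : Type*} (a : ℤ) {S : Finset ι} {f : ι → ℕ}
    (hf : ∀ j ∈ S, f j ≠ 0) : J(a | ∏ j ∈ S, f j) = ∏ j ∈ S, J(a | f j) := by
  classical
  induction S using Finset.induction_on with
  | empty => simp
  | insert i S hi ih =>
    rw [Finset.forall_mem_insert] at hf
    rw [Finset.prod_insert hi, Finset.prod_insert hi,
      jacobiSym.mul_right' _ hf.1 (Finset.prod_ne_zero_iff.2 hf.2), ih hf.2]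

/-- The product of the two symbols is `J(2 | m)` times the sign of quadratic reciprocity. -/
lemma emod_eight_eq_one_or_of_jacobiSym {m m' : ℕ} (hm : Odd m) (hm' : Odd m')
    (h : J(m | m') = 1) (h' : J(2 * m' | m) = 1) :
    m % 8 = 1 ∨ (m + 2 * m') % 8 = 1 := by
  rw [jacobiSym.mul_left, jacobiSym.at_two hm, ← jacobiSym.quadratic_reciprocity_if
    (Nat.odd_iff.1 hm') (Nat.odd_iff.1 hm), h, ZMod.χ₈_nat_eq_if_mod_eight] at h'
  grind

lemma chi_four_mul_emod_eight_of_jacobiSym {m m' : ℕ} (hm : Odd m) (hm' : Odd m')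
    (h : J(ZMod.χ₄ m * m | m') = 1) (h' : J(-8 * ZMod.χ₄ m * m' | m) = 1) :
    ZMod.χ₄ m * m % 8 = 1 := by
  rw [jacobiSym_chi_four_mul hm hm'] at h
  rw [jacobiSym.mul_left, h, mul_one, jacobiSym_neg_eight_mul_chi_four_self hm, jacobiSym.at_two hm,
    ZMod.χ₈_nat_eq_if_mod_eight] at h'
  grind [ZMod.χ₄_nat_eq_if_mod_four m]

end JacobiSym

section RedeiMatrix

variable {ι : Type*} {p : ι → ℕ} {S : Finset ι} {i : ι}

/-- The divisor of `∏ j, p j` attached to a set `S` of indices. -/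
def subprod (p : ι → ℕ) (S : Finset ι) : ℕ := ∏ j ∈ S, p j

lemma odd_subprod (hodd : ∀ i, Odd (p i)) (S : Finset ι) : Odd (subprod p S) :=
  Finset.prod_induction _ _ (fun _ _ ↦ Odd.mul) odd_one fun j _ ↦ hodd j

lemma coprime_subprod (hp : Pairwise (Nat.Coprime on p)) (hi : i ∉ S) :
    (subprod p S).Coprime (p i) :=
  Nat.Coprime.prod_left fun _ hj ↦ hp (ne_of_mem_of_not_mem hj hi)

variable [DecidableEq ι]

lemma mul_subprod_erase (hi : i ∈ S) : p i * subprod p (S.erase i) = subprod p S :=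
  Finset.mul_prod_erase _ _ hi

variable [Fintype ι]

lemma subprod_mul_subprod_compl (p : ι → ℕ) (S : Finset ι) :
    subprod p S * subprod p Sᶜ = ∏ j, p j :=
  Finset.prod_mul_prod_compl _ _

lemma subprod_erase_mul_subprod_compl (p : ι → ℕ) (hi : i ∈ S) :
    subprod p (S.erase i) * subprod p Sᶜ = subprod p {i}ᶜ := by
  rw [subprod, subprod, subprod, ← Finset.prod_union]
  · congr 1
    grind [Finset.mem_compl]
  · exact disjoint_compl_right.mono_left (S.erase_subset i)

/-- A Rédei matrix, with entries in `{±1}` rather than in `𝔽₂`. The diagonal is chosen so that the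
products of the entries along a row (resp. column), over the indices in `S`, are the symbols that
decide the local conditions on a class of support `S` for `E'` (resp. `E`). -/
def redeiMatrix (p : ι → ℕ) : Matrix ι ι ℤ := fun i j ↦
  if i = j then J(2 * subprod p {i}ᶜ | p i) else J(p j | p i)

lemma isUnit_redeiMatrix (hodd : ∀ i, Odd (p i)) (hp : Pairwise (Nat.Coprime on p)) (i j : ι) :
    IsUnit (redeiMatrix p i j) := by
  have hdiag : (2 * subprod p {i}ᶜ).Coprime (p i) :=
    (Nat.coprime_two_left.2 (hodd i)).mul_left (coprime_subprod hp (by simp))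
  rw [Int.isUnit_iff, redeiMatrix]
  split_ifs with hij
  · exact jacobiSym.eq_one_or_neg_one (mod_cast hdiag)
  · exact jacobiSym.eq_one_or_neg_one (mod_cast hp (Ne.symm hij))

lemma prod_redeiMatrix_row_of_notMem (hi : i ∉ S) :
    ∏ j ∈ S, redeiMatrix p i j = J(subprod p S | p i) := by
  rw [subprod, Nat.cast_prod, jacobiSym_prod_left]
  exact Finset.prod_congr rfl fun j hj ↦ if_neg (ne_of_mem_of_not_mem hj hi).symm

lemma prod_redeiMatrix_col_of_notMem (hodd : ∀ i, Odd (p i)) (hi : i ∉ S) :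
    ∏ j ∈ S, redeiMatrix p j i = J(ZMod.χ₄ (subprod p S) * subprod p S | p i) := by
  rw [jacobiSym_chi_four_mul (odd_subprod hodd S) (hodd i), subprod,
    jacobiSym_prod_right _ fun j _ ↦ (hodd j).pos.ne']
  exact Finset.prod_congr rfl fun j hj ↦ if_neg (ne_of_mem_of_not_mem hj hi)

lemma redeiMatrix_self_mul_jacobiSym (hp : Pairwise (Nat.Coprime on p)) (hi : i ∈ S) :
    redeiMatrix p i i * J(subprod p (S.erase i) | p i) = J(2 * subprod p Sᶜ | p i) := by
  have hsq : J(subprod p (S.erase i) | p i) * J(subprod p (S.erase i) | p i) = 1 :=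
    jacobiSym_mul_self (mod_cast coprime_subprod hp (S.notMem_erase i))
  rw [redeiMatrix, if_pos rfl, ← subprod_erase_mul_subprod_compl p hi, Nat.cast_mul]
  simp only [jacobiSym.mul_left]
  linear_combination J(2 | p i) * J(subprod p Sᶜ | p i) * hsq

lemma prod_redeiMatrix_row (hp : Pairwise (Nat.Coprime on p)) (S : Finset ι) (i : ι) :
    ∏ j ∈ S, redeiMatrix p i j = J(if i ∈ S then 2 * subprod p Sᶜ else subprod p S | p i) := by
  split_ifs with hi
  · rw [← Finset.mul_prod_erase _ _ hi, prod_redeiMatrix_row_of_notMem (S.notMem_erase i),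
      redeiMatrix_self_mul_jacobiSym hp hi]
  · exact prod_redeiMatrix_row_of_notMem hi

lemma prod_redeiMatrix_col (hodd : ∀ i, Odd (p i)) (hp : Pairwise (Nat.Coprime on p))
    (S : Finset ι) (i : ι) :
    ∏ j ∈ S, redeiMatrix p j i = J(if i ∈ S then -8 * ZMod.χ₄ (subprod p S) * subprod p Sᶜ
      else ZMod.χ₄ (subprod p S) * subprod p S | p i) := by
  split_ifs with hi
  · rw [← Finset.mul_prod_erase _ _ hi, prod_redeiMatrix_col_of_notMem hodd (S.notMem_erase i),
      jacobiSym.mul_left, mul_left_comm, redeiMatrix_self_mul_jacobiSym hp hi,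
      ← mul_subprod_erase hi, jacobiSym.mul_left 2, jacobiSym.mul_left (-8 * _),
      jacobiSym_neg_eight_mul_chi_four_mul (hodd i)]
    ring
  · exact prod_redeiMatrix_col_of_notMem hodd hi

lemma jacobiSym_subprod_of_forall (hodd : ∀ i, Odd (p i)) {a b : ℤ}
    (h : ∀ i, J(if i ∈ S then b else a | p i) = 1) :
    J(a | subprod p Sᶜ) = 1 ∧ J(b | subprod p S) = 1 := by
  have hp0 (T : Finset ι) : ∀ j ∈ T, p j ≠ 0 := fun j _ ↦ (hodd j).pos.ne'
  rw [subprod, subprod, jacobiSym_prod_right a (hp0 _), jacobiSym_prod_right b (hp0 _)]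
  constructor <;> refine Finset.prod_eq_one fun j hj ↦ ?_
  · rw [← h j, if_neg (Finset.mem_compl.1 hj)]
  · rw [← h j, if_pos hj]

end RedeiMatrix

section SignMatrix

/-- The identification of the subsets of `ι` with the vectors over `𝔽₂`, by indicator functions. -/
def finsetEquivZModTwo (ι : Type*) [Fintype ι] [DecidableEq ι] : Finset ι ≃ (ι → ZMod 2) where
  toFun S j := if j ∈ S then 1 else 0
  invFun v := {j | v j = 1}
  left_inv S := by ext; simp
  right_inv v := by
    have h : ∀ a : ZMod 2, (if a = 1 then 1 else 0) = a := by decide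
    ext
    simp [h]

lemma natCard_finset_sum_eq_zero {ι : Type*} [Fintype ι] (M : Matrix ι ι (ZMod 2)) :
    Nat.card {S : Finset ι // ∀ i, ∑ j ∈ S, M i j = 0} = 2 ^ (Fintype.card ι - M.rank) := by
  classical
  have e : {S : Finset ι // ∀ i, ∑ j ∈ S, M i j = 0} ≃ LinearMap.ker M.mulVecLin :=
    (finsetEquivZModTwo ι).subtypeEquiv fun S ↦ by
      simp [finsetEquivZModTwo, funext_iff, Matrix.mulVec, dotProduct]
  have hdim : M.rank + Module.finrank (ZMod 2) (LinearMap.ker M.mulVecLin) = Fintype.card ι := by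
    rw [Matrix.rank, LinearMap.finrank_range_add_finrank_ker, Module.finrank_fintype_fun_eq_card]
  rw [Nat.card_congr e, Module.natCard_eq_pow_finrank (K := ZMod 2), Nat.card_zmod, ← hdim,
    Nat.add_sub_cancel_left]

/-- Row rank equals column rank over `𝔽₂ ≃ {±1}`. -/
lemma natCard_prod_row_eq_natCard_prod_col {ι : Type*} [Finite ι] {A : Matrix ι ι ℤ}
    (hA : ∀ i j, IsUnit (A i j)) :
    Nat.card {S : Finset ι // ∀ i, ∏ j ∈ S, A i j = 1} =
      Nat.card {S : Finset ι // ∀ i, ∏ j ∈ S, A j i = 1} := by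
  cases nonempty_fintype ι
  choose U hU using hA
  let e : Additive ℤˣ ≃+ ZMod 2 := addEquivOfPrimeCardEq (p := 2) (by simp) (by simp)
  let M : Matrix ι ι (ZMod 2) := fun i j ↦ e (.ofMul (U i j))
  have hM (S : Finset ι) (f : ι → ℤˣ) :
      ∏ j ∈ S, (f j : ℤ) = 1 ↔ ∑ j ∈ S, e (.ofMul (f j)) = 0 := by
    rw [← map_sum, ← ofMul_prod, EmbeddingLike.map_eq_zero_iff, ofMul_eq_zero, ← Units.coe_prod,
      Units.val_eq_one]
  simp only [← hU, hM]
  exact (natCard_finset_sum_eq_zero M).trans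
    (M.rank_transpose ▸ (natCard_finset_sum_eq_zero M.transpose).symm)

end SignMatrix

/-- `(ε, t, S) ↦ (ε ^^ k, !t, Sᶜ)` exchanges the elements with `t = false` and those with
`t = true`. -/
lemma natCard_subtype_eq_two_mul {ι : Type*} [Fintype ι] [DecidableEq ι]
    {P : Bool × Bool × Finset ι → Prop} {Q : Finset ι → Prop} (k : Bool) (σ : Finset ι → Bool)
    (hcompl : ∀ ε t S, P (ε, t, S) → P (ε ^^ k, !t, Sᶜ))
    (hodd : ∀ ε S, P (ε, false, S) ↔ ε = σ S ∧ Q S) :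
    Nat.card {x // P x} = 2 * Nat.card {S // Q S} := by
  have heven (ε : Bool) (S : Finset ι) : P (ε, true, S) ↔ ε = (σ Sᶜ ^^ k) ∧ Q Sᶜ := by
    have hsign : ε = (σ Sᶜ ^^ k) ↔ (ε ^^ k) = σ Sᶜ := by
      cases ε <;> cases k <;> cases σ Sᶜ <;> decide
    rw [hsign, ← hodd]
    exact ⟨hcompl _ _ _, fun h ↦ by simpa using hcompl _ _ _ h⟩
  let f : Bool × {S // Q S} → {x // P x} := fun y ↦
    bif y.1 then ⟨(σ y.2 ^^ k, true, y.2ᶜ), by simp [heven, y.2.2]⟩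
    else ⟨(σ y.2, false, y.2), by simp [hodd, y.2.2]⟩
  have hf : f.Bijective := by
    constructor
    · rintro ⟨_ | _, S⟩ ⟨_ | _, T⟩ h <;> simp_all [f, Subtype.ext_iff]
    · rintro ⟨⟨ε, _ | _, S⟩, hx⟩
      · exact ⟨(false, ⟨S, ((hodd _ _).1 hx).2⟩), by simp [f, ((hodd _ _).1 hx).1]⟩
      · exact ⟨(true, ⟨Sᶜ, ((heven _ _).1 hx).2⟩), by simp [f, ((heven _ _).1 hx).1]⟩
  rw [← Nat.card_congr (Equiv.ofBijective f hf), Nat.card_prod, Nat.card_eq_fintype_card,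
    Fintype.card_bool]

section LocalConditions

lemma not_dvd_two_pow {q : ℕ} (hq : q.Prime) (hodd : Odd q) (k : ℕ) : ¬ q ∣ 2 ^ k :=
  hq.coprime_iff_not_dvd.1 ((Nat.coprime_two_right.2 hodd).pow_right k)

variable {ι : Type*} {p : ι → ℕ} [hp : ∀ i, Fact (p i).Prime] {S : Finset ι} {i : ι}

lemma not_dvd_mul_subprod (hcop : Pairwise (Nat.Coprime on p)) {u : ℤ} (hu : ¬ (p i : ℤ) ∣ u)
    (hi : i ∉ S) : ¬ (p i : ℤ) ∣ u * subprod p S := fun h ↦ by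
  rcases (Nat.prime_iff_prime_int.1 (hp i).out).dvd_or_dvd h with h | h
  · exact hu h
  · exact ((hp i).out.coprime_iff_not_dvd.1 (coprime_subprod hcop hi).symm) (mod_cast h)

variable [Fintype ι] [DecidableEq ι]

lemma quarticSolvable_padic_iff_of_notMem (hodd : ∀ i, Odd (p i))
    (hcop : Pairwise (Nat.Coprime on p)) {u v : ℤ} (hu : ¬ (p i : ℤ) ∣ u) (hv : ¬ (p i : ℤ) ∣ v)
    (hi : i ∉ S) :
    QuarticSolvable ℚ_[p i] (u * subprod p S : ℤ) (v * subprod p Sᶜ : ℤ) ↔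
      J(u * subprod p S | p i) = 1 := by
  have hp2 : p i ≠ 2 := fun h ↦ absurd (hodd i) (by rw [h]; decide)
  have hpull : v * subprod p Sᶜ = p i * (v * subprod p (Sᶜ.erase i)) := by
    rw [← mul_subprod_erase (Finset.mem_compl.2 hi), Nat.cast_mul, mul_left_comm]
  rw [hpull, Int.cast_mul (p i : ℤ), Int.cast_natCast]
  exact quarticSolvable_padic_iff_jacobiSym hp2 (not_dvd_mul_subprod hcop hu hi)
    (not_dvd_mul_subprod hcop hv (Finset.notMem_erase i _))

lemma quarticSolvable_padic_iff_jacobiSym_subprod (hodd : ∀ i, Odd (p i))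
    (hcop : Pairwise (Nat.Coprime on p)) {u v : ℤ} (hu : ¬ (p i : ℤ) ∣ u) (hv : ¬ (p i : ℤ) ∣ v) :
    QuarticSolvable ℚ_[p i] (u * subprod p S : ℤ) (v * subprod p Sᶜ : ℤ) ↔
      J(if i ∈ S then v * subprod p Sᶜ else u * subprod p S | p i) = 1 := by
  split_ifs with hi
  · have hne {w : ℤ} (hw : ¬ (p i : ℤ) ∣ w) (T : Finset ι) : (w * subprod p T : ℤ) ≠ 0 :=
      mul_ne_zero (by rintro rfl; simp at hw) (mod_cast (odd_subprod hodd T).pos.ne')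
    rw [quarticSolvable_comm (mod_cast hne hu _) (mod_cast hne hv _)]
    simpa using quarticSolvable_padic_iff_of_notMem hodd hcop hv hu (Finset.notMem_compl.2 hi)
  · exact quarticSolvable_padic_iff_of_notMem hodd hcop hu hv hi

end LocalConditions

section Selmer

variable {n : ℕ} {p : Fin n → ℕ}

lemma classVal_mul_classVal_compl (k ε t : Bool) (S : Finset (Fin n)) :
    classVal p (ε, t, S) * classVal p (ε ^^ k, !t, Sᶜ) =
      (if k then -2 else 2) * ∏ i, (p i : ℚ) := by
  rw [← Finset.prod_mul_prod_compl S]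
  cases k <;> cases ε <;> cases t <;> simp [classVal] <;> ring

variable [hp : ∀ i, Fact (p i).Prime]

lemma inSelmer_of_classVal_mul_eq {c r : ℚ} {x y : Bool × Bool × Finset (Fin n)} (hc : c ≠ 0)
    (hxy : classVal p x * classVal p y * r ^ 2 = c) (h : inSelmer p (fun i ↦ (hp i).out) c x) :
    inSelmer p (fun i ↦ (hp i).out) c y :=
  ⟨QuarticSolvable.ratCast_div_of_mul_eq hc hxy h.1,
    QuarticSolvable.ratCast_div_of_mul_eq hc hxy h.2.1,
    fun i ↦ QuarticSolvable.ratCast_div_of_mul_eq hc hxy (h.2.2 i)⟩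

lemma inSelmer_odd_iff (hodd : ∀ i, Odd (p i)) (hcop : Pairwise (Nat.Coprime on p)) {c u : ℤ}
    (hc : ∀ i, ¬ (p i : ℤ) ∣ c) {ε : Bool} (hu : u = if ε then -1 else 1) (S : Finset (Fin n)) :
    inSelmer p (fun i ↦ (hp i).out) (c * ∏ i, (p i : ℚ)) (ε, false, S) ↔
      (0 < u ∨ 0 < c * u) ∧
      QuarticSolvable ℚ_[2] (u * subprod p S : ℤ) (c * u * subprod p Sᶜ : ℤ) ∧
      ∀ i, J(if i ∈ S then c * u * subprod p Sᶜ else u * subprod p S | p i) = 1 := by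
  have hunit : IsUnit u := by rw [hu]; split_ifs <;> simp
  have husq : (u * u : ℚ) = 1 := mod_cast Int.isUnit_mul_self hunit
  have hpos (T : Finset (Fin n)) : (0 : ℤ) < subprod p T := mod_cast (odd_subprod hodd T).pos
  have hclass : classVal p (ε, false, S) = (u * subprod p S : ℤ) := by
    simp [classVal, subprod, hu]
  have hquot : (c * ∏ i, (p i : ℚ)) / (u * subprod p S : ℤ) = (c * u * subprod p Sᶜ : ℤ) := by
    have hne : ((u * subprod p S : ℤ) : ℚ) ≠ 0 :=
      mod_cast mul_ne_zero hunit.ne_zero (hpos S).ne'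
    rw [div_eq_iff hne, ← Nat.cast_prod, ← subprod_mul_subprod_compl p S]
    push_cast
    linear_combination -(c * subprod p S * subprod p Sᶜ : ℚ) * husq
  have hreal : QuarticSolvable ℝ (u * subprod p S : ℤ) (c * u * subprod p Sᶜ : ℤ) ↔
      0 < u ∨ 0 < c * u := by
    rw [quarticSolvable_real_iff, Int.cast_nonneg_iff, Int.cast_pos,
      mul_nonneg_iff_of_pos_right (hpos S), mul_pos_iff_of_pos_right (hpos Sᶜ),
      hunit.ne_zero.symm.le_iff_lt]
  have hdvd {v : ℤ} (hv : IsUnit v) (i : Fin n) : ¬ (p i : ℤ) ∣ v := fun h ↦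
    (Nat.prime_iff_prime_int.1 (hp i).out).not_isUnit (isUnit_of_dvd_unit h hv)
  unfold inSelmer locSolvAt
  rw [hclass, hquot]
  simp only [Rat.cast_intCast]
  exact and_congr hreal <| and_congr Iff.rfl <| forall_congr' fun i ↦
    quarticSolvable_padic_iff_jacobiSym_subprod hodd hcop (hdvd hunit i)
      (hunit.dvd_mul_right.not.2 (hc i))

lemma inSelmer_two_iff (hodd : ∀ i, Odd (p i)) (hcop : Pairwise (Nat.Coprime on p)) (ε : Bool)
    (S : Finset (Fin n)) :
    inSelmer p (fun i ↦ (hp i).out) (2 * ∏ i, (p i : ℚ)) (ε, false, S) ↔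
      ε = false ∧ ∀ i, ∏ j ∈ S, redeiMatrix p i j = 1 := by
  have hdvd (i : Fin n) : ¬ (p i : ℤ) ∣ 2 := mod_cast not_dvd_two_pow (hp i).out (hodd i) 1
  simp only [prod_redeiMatrix_row hcop]
  cases ε
  · rw [← Int.cast_ofNat, inSelmer_odd_iff hodd hcop hdvd (u := 1) rfl]
    simp only [one_mul, mul_one, one_pos, true_or, true_and, and_iff_right_iff_imp]
    intro h
    obtain ⟨hcompl, hself⟩ := jacobiSym_subprod_of_forall hodd h
    rcases emod_eight_eq_one_or_of_jacobiSym (odd_subprod hodd S) (odd_subprod hodd Sᶜ) hcompl hself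
      with h1 | h1
    · exact quarticSolvable_padic_two_of_emod_eight 0 (by lia)
    · exact quarticSolvable_padic_two_of_emod_eight 1 (by lia)
  · rw [← Int.cast_ofNat, inSelmer_odd_iff hodd hcop hdvd (u := -1) rfl]
    simp

lemma inSelmer_neg_eight_iff (hodd : ∀ i, Odd (p i)) (hcop : Pairwise (Nat.Coprime on p))
    (ε : Bool) (S : Finset (Fin n)) :
    inSelmer p (fun i ↦ (hp i).out) (-8 * ∏ i, (p i : ℚ)) (ε, false, S) ↔
      ε = decide (subprod p S % 4 = 3) ∧ ∀ i, ∏ j ∈ S, redeiMatrix p j i = 1 := by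
  have hdvd (i : Fin n) : ¬ (p i : ℤ) ∣ -8 :=
    Int.dvd_neg.not.2 (mod_cast not_dvd_two_pow (hp i).out (hodd i) 3)
  obtain ⟨u, hu⟩ : ∃ u : ℤ, u = if ε then -1 else 1 := ⟨_, rfl⟩
  have hm : Odd (subprod p S) := odd_subprod hodd S
  have hsign : ε = decide (subprod p S % 4 = 3) ↔ u = ZMod.χ₄ (subprod p S) := by
    grind [ZMod.χ₄_nat_eq_if_mod_four (subprod p S)]
  have hmod : u * subprod p S % 4 = 1 ↔ u = ZMod.χ₄ (subprod p S) := by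
    grind [ZMod.χ₄_nat_eq_if_mod_four (subprod p S)]
  have hreal : 0 < u ∨ 0 < -8 * u := by grind
  have htwo (h : QuarticSolvable ℚ_[2] (u * subprod p S : ℤ) (-8 * u * subprod p Sᶜ : ℤ)) :
      u = ZMod.χ₄ (subprod p S) := by
    have hm' : Odd (subprod p Sᶜ) := odd_subprod hodd Sᶜ
    have hu_odd : Odd u := by rw [hu]; split_ifs <;> decide
    refine hmod.1 (emod_four_eq_one_of_quarticSolvable_padic_two (f := -u * subprod p Sᶜ)
      (hu_odd.mul (mod_cast hm)) (hu_odd.neg.mul (mod_cast hm')) ?_)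
    convert h using 1
    push_cast
    ring
  rw [show (-8 : ℚ) = (-8 : ℤ) by norm_num, inSelmer_odd_iff hodd hcop hdvd hu, hsign,
    and_iff_right hreal]
  simp only [prod_redeiMatrix_col hodd hcop]
  constructor
  · rintro ⟨h, hi⟩
    obtain rfl := htwo h
    exact ⟨rfl, hi⟩
  · rintro ⟨rfl, hi⟩
    refine ⟨quarticSolvable_padic_two_of_emod_eight 0 ?_, hi⟩
    obtain ⟨hcompl, hself⟩ := jacobiSym_subprod_of_forall hodd hi
    have := chi_four_mul_emod_eight_of_jacobiSym hm (odd_subprod hodd Sᶜ) hcompl hself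
    lia

lemma natCard_inSelmer_two (hodd : ∀ i, Odd (p i)) (hcop : Pairwise (Nat.Coprime on p)) :
    Nat.card {x // inSelmer p (fun i ↦ (hp i).out) (2 * ∏ i, (p i : ℚ)) x} =
      2 * Nat.card {S : Finset (Fin n) // ∀ i, ∏ j ∈ S, redeiMatrix p i j = 1} := by
  have hD : ∏ i, (p i : ℚ) ≠ 0 := Finset.prod_ne_zero_iff.2 fun i _ ↦ mod_cast (hodd i).pos.ne'
  refine natCard_subtype_eq_two_mul false _ (fun ε t S ↦ ?_) (inSelmer_two_iff hodd hcop)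
  refine inSelmer_of_classVal_mul_eq (r := 1) (by positivity) ?_
  rw [classVal_mul_classVal_compl]
  simp

lemma natCard_inSelmer_neg_eight (hodd : ∀ i, Odd (p i)) (hcop : Pairwise (Nat.Coprime on p)) :
    Nat.card {x // inSelmer p (fun i ↦ (hp i).out) (-8 * ∏ i, (p i : ℚ)) x} =
      2 * Nat.card {S : Finset (Fin n) // ∀ i, ∏ j ∈ S, redeiMatrix p j i = 1} := by
  have hD : ∏ i, (p i : ℚ) ≠ 0 := Finset.prod_ne_zero_iff.2 fun i _ ↦ mod_cast (hodd i).pos.ne'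
  refine natCard_subtype_eq_two_mul true _ (fun ε t S ↦ ?_) (inSelmer_neg_eight_iff hodd hcop)
  refine inSelmer_of_classVal_mul_eq (r := 2) (by simpa) ?_
  rw [classVal_mul_classVal_compl, if_pos rfl]
  ring

lemma natCard_inSelmer_pos (c : ℚ) :
    0 < Nat.card {x // inSelmer p (fun i ↦ (hp i).out) c x} := by
  have htrivial : inSelmer p (fun i ↦ (hp i).out) c (false, false, ∅) := by
    refine ⟨?_, ?_, fun i ↦ ?_⟩ <;> exact QuarticSolvable.of_isSquare (by simp [classVal])
  have : Nonempty {x // inSelmer p (fun i ↦ (hp i).out) c x} := ⟨⟨_, htrivial⟩⟩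
  exact Nat.card_pos

end Selmer

/-- For `D` a squarefree product of `n` distinct odd primes, `E : y² = x³ + 2Dx` and
`E' : y² = x³ - 8Dx` its `2`-isogenous curve, the `φ`-Selmer groups of `E` (torsors
`W² = d - (8D/d)Z⁴`) and of `E'` (torsors `W² = d + (2D/d)Z⁴`) have the same order;
in particular the Tamagawa ratio `T_{-2D} = 1`. -/
theorem stmt_17 (n : ℕ) (p : Fin n → ℕ) (hp : ∀ i, (p i).Prime)
    (hodd : ∀ i, p i % 2 = 1) (hinj : Function.Injective p)
    (D : ℚ) (hD : D = ∏ i, (p i : ℚ)) :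
    Nat.card {x : Bool × Bool × Finset (Fin n) // inSelmer p hp (-8 * D) x} =
      Nat.card {x : Bool × Bool × Finset (Fin n) // inSelmer p hp (2 * D) x} ∧
    (Nat.card {x : Bool × Bool × Finset (Fin n) // inSelmer p hp (-8 * D) x} : ℚ) /
      (Nat.card {x : Bool × Bool × Finset (Fin n) // inSelmer p hp (2 * D) x} : ℚ)
      = 1 := by
  have : ∀ i, Fact (p i).Prime := fun i ↦ ⟨hp i⟩
  have hodd' (i : Fin n) : Odd (p i) := Nat.odd_iff.2 (hodd i)
  have hcop : Pairwise (Nat.Coprime on p) := fun i j hij ↦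
    (Nat.coprime_primes (hp i) (hp j)).2 (hinj.ne hij)
  have hcard : Nat.card {x // inSelmer p hp (-8 * D) x} =
      Nat.card {x // inSelmer p hp (2 * D) x} := by
    rw [hD, natCard_inSelmer_neg_eight hodd' hcop, natCard_inSelmer_two hodd' hcop,
      natCard_prod_row_eq_natCard_prod_col (isUnit_redeiMatrix hodd' hcop)]
  exact ⟨hcard, by rw [hcard, div_self (mod_cast (natCard_inSelmer_pos _).ne')]⟩
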